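/- Let n ≥ 2, let a₁,...,aₙ be positive integers, let m be a positive integer, and let b be a nonnegative integer. Let r be the remainder of b modulo m, set s* = ⌊((m−1)·∑_{i=1}^n aᵢ − r)/m⌋, and for each integer k ≥ 0 let l*_k denote the number of tuples (t₁,...,tₙ) of nonnegative integers with ∑_{i=1}^n aᵢtᵢ = r + km and tᵢ ≤ m − 1 for every i. Then P(b) = ∑_{k=0}^{s*} l*_k · P(⌊b/m⌋ − k). -/

import Mathlib

/-!
Divide every coordinate of a solution by `m`: writing `x = t + m y` with `0 ≤ tᵢ < m`, the equation
`∑ aᵢxᵢ = b = r + m⌊b/m⌋` becomes `∑ aᵢtᵢ + m ∑ aᵢyᵢ = r + m⌊b/m⌋`. Setting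
`k = ⌊b/m⌋ - ∑ aᵢyᵢ`, this says `∑ aᵢtᵢ = r + km`. Hence the solutions with a given `k` correspond
to pairs (bounded solution `t` for `r + km`, solution `y` for `⌊b/m⌋ - k`), which is
`card_fiber`. Finally `0 ≤ ∑ aᵢtᵢ ≤ (m - 1) ∑ aᵢ` together with `r < m` forces `0 ≤ k ≤ s*`
(`fiber_index_mem`), and summing over `k` gives the formula.
-/

lemma finite_solutions {n : ℕ} (a : Fin n → ℕ) (ha : ∀ i, 0 < a i) (c : ℤ) :
    {x : Fin n → ℕ | ∑ i, (a i : ℤ) * x i = c}.Finite := by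
  refine (Set.finite_Iic (fun _ : Fin n => c.toNat)).subset ?_
  intro x hx i
  have hx' : ∑ i, (a i : ℤ) * x i = c := hx
  have h1 : (a i : ℤ) * x i ≤ ∑ i, (a i : ℤ) * x i :=
    Finset.single_le_sum (f := fun i => (a i : ℤ) * x i)
      (fun j _ => by positivity) (Finset.mem_univ i)
  have h2 : (x i : ℤ) ≤ (a i : ℤ) * x i :=
    le_mul_of_one_le_left (by positivity) (by exact_mod_cast ha i)
  change x i ≤ c.toNat
  omega

lemma sum_mod_add_div {n : ℕ} (a x : Fin n → ℕ) (m : ℕ) :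
    ∑ i, (a i : ℤ) * x i =
      ∑ i, (a i : ℤ) * (x i % m : ℕ) + m * ∑ i, (a i : ℤ) * (x i / m : ℕ) := by
  rw [Finset.mul_sum, ← Finset.sum_add_distrib]
  refine Finset.sum_congr rfl fun i _ => ?_
  have h : (x i : ℤ) = (x i % m : ℕ) + m * (x i / m : ℕ) := by
    exact_mod_cast (Nat.mod_add_div (x i) m).symm
  conv_lhs => rw [h]
  ring

/-- The solutions for `r + m q` whose coordinatewise quotient by `m` is a solution for `q - k`
correspond, by coordinatewise division with remainder, to pairs (remainder, quotient). -/
lemma card_fiber {n : ℕ} (a : Fin n → ℕ) (m : ℕ) (hm : 0 < m) (r q k : ℤ) :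
    Nat.card {x : Fin n → ℕ // (∑ i, (a i : ℤ) * x i = r + m * q) ∧
        q - ∑ i, (a i : ℤ) * (x i / m : ℕ) = k} =
      Nat.card {t : Fin n → ℕ // (∑ i, (a i : ℤ) * t i = r + k * m) ∧ ∀ i, t i ≤ m - 1} *
        Nat.card {y : Fin n → ℕ // ∑ i, (a i : ℤ) * y i = q - k} := by
  rw [← Nat.card_prod]
  refine Nat.card_congr
    { toFun := fun x => (⟨fun i => x.1 i % m, ?_, ?_⟩, ⟨fun i => x.1 i / m, ?_⟩)
      invFun := fun p => ⟨fun i => p.1.1 i + m * p.2.1 i, ?_, ?_⟩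
      left_inv := ?_
      right_inv := ?_ }
  · have h := sum_mod_add_div a x.1 m
    rw [x.2.1] at h
    linear_combination -h + (m : ℤ) * x.2.2
  · intro i
    have := Nat.mod_lt (x.1 i) hm
    change x.1 i % m ≤ m - 1
    omega
  · linear_combination -x.2.2
  · have h1 := p.1.2.1
    have h2 := p.2.2
    have h3 : ∑ i, (a i : ℤ) * ((p.1.1 i + m * p.2.1 i : ℕ) : ℤ) =
        ∑ i, (a i : ℤ) * p.1.1 i + m * ∑ i, (a i : ℤ) * p.2.1 i := by
      rw [Finset.mul_sum, ← Finset.sum_add_distrib]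
      refine Finset.sum_congr rfl fun i _ => ?_
      push_cast
      ring
    rw [h3, h1, h2]
    ring
  · have h2 := p.2.2
    have h3 : ∀ i, (p.1.1 i + m * p.2.1 i) / m = p.2.1 i := by
      intro i
      have := p.1.2.2 i
      rw [Nat.add_mul_div_left _ _ hm, Nat.div_eq_of_lt (by omega), zero_add]
    simp only [h3]
    rw [h2]
    ring
  · intro x
    ext i
    exact Nat.mod_add_div (x.1 i) m
  · intro p
    refine Prod.ext (Subtype.ext (funext fun i => ?_)) (Subtype.ext (funext fun i => ?_))
    · have := p.1.2.2 i
      change (p.1.1 i + m * p.2.1 i) % m = p.1.1 i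
      rw [Nat.add_mul_mod_self_left, Nat.mod_eq_of_lt (by omega)]
    · have := p.1.2.2 i
      change (p.1.1 i + m * p.2.1 i) / m = p.2.1 i
      rw [Nat.add_mul_div_left _ _ hm, Nat.div_eq_of_lt (by omega), zero_add]

/-- The index `k` attached to a solution lies in the range of summation. -/
lemma fiber_index_mem {n : ℕ} (a : Fin n → ℕ) (m : ℕ) (hm : 0 < m) (r : ℕ) (hr : r < m) (q : ℤ)
    (x : Fin n → ℕ) (hx : ∑ i, (a i : ℤ) * x i = r + m * q) :
    q - ∑ i, (a i : ℤ) * (x i / m : ℕ) ∈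
      Finset.Icc (0 : ℤ) ⌊(((m : ℚ) - 1) * (∑ i, (a i : ℚ)) - r) / m⌋ := by
  set k := q - ∑ i, (a i : ℤ) * (x i / m : ℕ) with hk
  have hsum : ∑ i, (a i : ℤ) * (x i % m : ℕ) = r + m * k := by
    have h := sum_mod_add_div a x m
    rw [hx] at h
    linear_combination -h - (m : ℤ) * hk
  have hnonneg : 0 ≤ ∑ i, (a i : ℤ) * (x i % m : ℕ) :=
    Finset.sum_nonneg fun i _ => by positivity
  have hle : ∑ i, (a i : ℤ) * (x i % m : ℕ) ≤ ((m : ℤ) - 1) * ∑ i, (a i : ℤ) := by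
    rw [Finset.mul_sum]
    refine Finset.sum_le_sum fun i _ => ?_
    rw [mul_comm]
    have := Nat.mod_lt (x i) hm
    exact mul_le_mul_of_nonneg_right (by omega) (by positivity)
  rw [hsum] at hnonneg hle
  refine Finset.mem_Icc.2 ⟨?_, ?_⟩
  · by_contra hneg
    have : (m : ℤ) * k ≤ m * (-1) := mul_le_mul_of_nonneg_left (by omega) (by positivity)
    omega
  · rw [Int.le_floor, le_div_iff₀ (by exact_mod_cast hm)]
    have hle' : (r : ℚ) + m * k ≤ ((m : ℚ) - 1) * ∑ i, (a i : ℚ) := by exact_mod_cast hle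
    linarith

theorem stmt_17 (n : ℕ) (hn : 2 ≤ n) (a : Fin n → ℕ)
    (ha : ∀ i, 0 < a i) (m : ℕ) (hm : 0 < m) (b : ℕ)
    (r : ℕ) (hr : r = b % m)
    (P : ℤ → ℕ)
    (hP : ∀ c : ℤ, P c = Nat.card {x : Fin n → ℕ // ∑ i, (a i : ℤ) * x i = c})
    (sstar : ℤ)
    (hs : sstar = ⌊(((m : ℚ) - 1) * (∑ i, (a i : ℚ)) - r) / m⌋)
    (lstar : ℤ → ℕ)
    (hlstar : ∀ k : ℤ, lstar k =
      Nat.card {t : Fin n → ℕ //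
        (∑ i, (a i : ℤ) * t i = (r : ℤ) + k * m) ∧ ∀ i, t i ≤ m - 1}) :
    (P (b : ℤ) : ℤ) =
      ∑ k ∈ Finset.Icc (0 : ℤ) sstar,
        (lstar k : ℤ) * (P (((b / m : ℕ) : ℤ) - k) : ℤ) := by
  have hb : (b : ℤ) = r + m * (b / m : ℕ) := by
    rw [hr]
    exact_mod_cast (Nat.mod_add_div b m).symm
  have hrm : r < m := hr ▸ Nat.mod_lt b hm
  generalize ((b / m : ℕ) : ℤ) = q at hb ⊢
  have hfin := finite_solutions a ha (r + m * q)
  have hmem : ∀ x, x ∈ hfin.toFinset ↔ ∑ i, (a i : ℤ) * x i = r + m * q := fun x => by simp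
  have hcard : P b = hfin.toFinset.card := by
    rw [hP, hb, Nat.subtype_card _ hmem]
  rw [hcard, Finset.card_eq_sum_card_fiberwise (t := Finset.Icc (0 : ℤ) sstar)
    (f := fun x : Fin n → ℕ => q - ∑ i, (a i : ℤ) * (x i / m : ℕ))
    (fun x hx => by
      rw [hs]
      exact fiber_index_mem a m hm r hrm q x ((hmem x).1 hx))]
  rw [Nat.cast_sum]
  refine Finset.sum_congr rfl fun k _ => ?_
  rw [hlstar, hP, ← Nat.cast_mul, ← card_fiber a m hm r q k]
  congr 1
  symm
  apply Nat.subtype_card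
  intro x
  rw [Finset.mem_filter, hmem]
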